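/- arXiv:math/0101223 — 2 statements merged into one kernel-verified Lean document; each statement's English description precedes it below -/
import Mathlib

section
/- Suppose a group Γ acts by algebraic automorphisms on a reduced irreducible complex variety M, fixing a smooth point y, and the induced linear action on the tangent space T_yM has Zariski closure G ⊆ GL(T_yM) such that G acts on T_yM with an open orbit and the identity component G° has no nontrivial characters. Then there is no nonconstant Γ-invariant rational function on M. -/
/-!
Write an invariant function as `p / q`, and let `T = T_yM`, with the linear action `τ` of `Γ`.

*Leading forms.* A polynomial `p` not vanishing on `M` has, by Krull's intersection theorem in the
coordinate ring of `M`, a finite order `a` at `y`. Modulo the ideal of `M` it then agrees up to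
order `a + 1` with a form of degree `a` in `x - y`, which is nonzero on `T`: a form vanishing on `T`
lies in `𝔪^(a+1) + I(M)` (`exists_leadingForm`). Along a curve in `M` leaving `y` with velocity `w`,
the value of this form at `w` is the coefficient of `t ^ a` in `p`.

*Curves.* Since the tangent dimension is minimal at `y`, every `w` in `T` is the velocity of a curve
in `M`, namely an integral curve of a polynomial vector field tangent to `M` (`exists_curve`). This
replaces the regularity of the local ring at `y`; in particular `p` and `q` need not be made coprime.

*Invariance.* Let `f`, `g` be the leading forms of `p`, `q` on `T`. Comparing `p / q` along a curve
of velocity `v` and along its image under `γ`, of velocity `τ γ v`, gives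
`f(τ γ v) g(v) = f(v) g(τ γ v)`. For `v₀` in the open orbit it follows that
`f(τ γ v₀) g(τ δ v₀) = f(τ δ v₀) g(τ γ v₀)` for all `γ`, `δ`. This is a polynomial identity in each
of `τ γ` and `τ δ`, so it extends to the Zariski closure: the ratio `f / g` is constant on the open
orbit, and `f = c g` on `T` (`proportional_of_relation`). As both forms are nonzero, they have the
same degree.

*Conclusion.* If `p ≠ c q` on `M`, then `(p - c q) / q` is a nonzero invariant function, so `p - c q`
has a leading form of the same degree as `g`, nonzero on `T`. But the coefficient of `p - c q` in
that degree is `f - c g = 0`.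
-/

open MvPolynomial

/-- A finitely presented group: a surjection from a finitely generated free group whose
kernel is the normal closure of a finite set of relations. -/
def GroupFinitelyPresented (Γ : Type*) [Group Γ] : Prop :=
  ∃ (k : ℕ) (φ : FreeGroup (Fin k) →* Γ) (S : Finset (FreeGroup (Fin k))),
    Function.Surjective φ ∧ φ.ker = Subgroup.normalClosure (S : Set (FreeGroup (Fin k)))

/-- The (embedded Zariski) tangent space of `M ⊆ ℂ^d` at a point `y`: vectors annihilated
by the differentials at `y` of all polynomials vanishing on `M`. -/
noncomputable def TangentSpaceAt {d : ℕ} (M : Set (Fin d → ℂ)) (y : Fin d → ℂ) :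
    Submodule ℂ (Fin d → ℂ) where
  carrier := {v | ∀ p : MvPolynomial (Fin d) ℂ, (∀ x ∈ M, eval x p = 0) →
    ∑ i : Fin d, v i * eval y (pderiv i p) = 0}
  zero_mem' := by intro p _; simp
  add_mem' := by
    intro v w hv hw p hp
    simp only [Pi.add_apply, add_mul, Finset.sum_add_distrib, hv p hp, hw p hp, add_zero]
  smul_mem' := by
    intro c v hv p hp
    simp only [Pi.smul_apply, smul_eq_mul, mul_assoc, ← Finset.mul_sum, hv p hp, mul_zero]

/-- The Zariski closure of a set of `r × r` complex matrices: the common zero locus of all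
polynomial functions (in the matrix entries) vanishing on the set. -/
def zariskiClosure {r : ℕ} (S : Set (Matrix (Fin r) (Fin r) ℂ)) :
    Set (Matrix (Fin r) (Fin r) ℂ) :=
  {mm | ∀ p : MvPolynomial (Fin r × Fin r) ℂ,
    (∀ s ∈ S, eval (fun ij => s ij.1 ij.2) p = 0) → eval (fun ij => mm ij.1 ij.2) p = 0}

/-- The Zariski closure, inside `GL(r, ℂ)`, of the image of a representation
`τ : Γ → GL(r, ℂ)`. -/
def monodromyClosure {r : ℕ} {Γ : Type*} [Group Γ] (τ : Γ →* GL (Fin r) ℂ) :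
    Set (Matrix (Fin r) (Fin r) ℂ) :=
  {mm ∈ zariskiClosure (Set.range fun γ : Γ => ((τ γ : Matrix (Fin r) (Fin r) ℂ))) |
    IsUnit mm}

/-- A candidate character of an algebraic subgroup of `GL(r, ℂ)`: a regular function
`mm ↦ p(mm) / det(mm)^k`. -/
noncomputable def charFn {r : ℕ} (p : MvPolynomial (Fin r × Fin r) ℂ) (k : ℕ)
    (mm : Matrix (Fin r) (Fin r) ℂ) : ℂ :=
  eval (fun ij => mm ij.1 ij.2) p * (mm.det ^ k)⁻¹

/-! ### Taylor expansion at a point -/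

/-- The maximal ideal of `ℂ[x₁, …, x_d]` at the point `y`. -/
noncomputable def maxIdealAt {d : ℕ} (y : Fin d → ℂ) : Ideal (MvPolynomial (Fin d) ℂ) :=
  Ideal.span (Set.range fun i => X i - C (y i))

/-- The differential of `p` at `y`, as an affine function of `x` vanishing at `y`. -/
noncomputable def linPart {d : ℕ} (y : Fin d → ℂ) (p : MvPolynomial (Fin d) ℂ) :
    MvPolynomial (Fin d) ℂ :=
  ∑ j, C (eval y (pderiv j p)) * (X j - C (y j))

lemma X_sub_mem {d : ℕ} (y : Fin d → ℂ) (i : Fin d) : X i - C (y i) ∈ maxIdealAt y :=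
  Ideal.subset_span ⟨i, rfl⟩

lemma linPart_mem {d : ℕ} (y : Fin d → ℂ) (p : MvPolynomial (Fin d) ℂ) :
    linPart y p ∈ maxIdealAt y :=
  Ideal.sum_mem _ fun j _ => Ideal.mul_mem_left _ _ (X_sub_mem y j)

/-- First-order Taylor expansion at `y`. -/
lemma taylor_one {d : ℕ} (y : Fin d → ℂ) (p : MvPolynomial (Fin d) ℂ) :
    p - C (eval y p) - linPart y p ∈ maxIdealAt y ^ 2 := by
  induction p using MvPolynomial.induction_on with
  | C a => simp [linPart]
  | add p q hp hq =>
    have : p + q - C (eval y (p + q)) - linPart y (p + q) =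
        (p - C (eval y p) - linPart y p) + (q - C (eval y q) - linPart y q) := by
      simp only [linPart, map_add, add_mul, Finset.sum_add_distrib]; ring
    rw [this]; exact add_mem hp hq
  | mul_X p i hp =>
    have hlin : linPart y (p * X i) =
        C (eval y p) * (X i - C (y i)) + C (y i) * linPart y p := by
      simp only [linPart, pderiv_mul, map_add, map_mul, add_mul, Finset.sum_add_distrib,
        eval_X, pderiv_X]
      rw [add_comm]
      congr 1
      · rw [Finset.sum_eq_single i]
        · simp
        · intro b _ hb
          simp [Ne.symm hb]
        · simp
      · rw [Finset.mul_sum]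
        refine Finset.sum_congr rfl fun j _ => by ring
    have h1 : p - C (eval y p) ∈ maxIdealAt y := by
      have := add_mem (Ideal.pow_le_self two_ne_zero hp) (linPart_mem y p)
      simpa using this
    have : p * X i - C (eval y (p * X i)) - linPart y (p * X i) =
        (p - C (eval y p)) * (X i - C (y i)) +
          C (y i) * (p - C (eval y p) - linPart y p) := by
      rw [hlin]; simp only [map_mul, eval_X]; ring
    rw [this, pow_two]
    exact add_mem (Ideal.mul_mem_mul h1 (X_sub_mem y i))
      (Ideal.mul_mem_left _ _ (by rw [← pow_two]; exact hp))

lemma sub_eval_mem {d : ℕ} (y : Fin d → ℂ) (p : MvPolynomial (Fin d) ℂ) :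
    p - C (eval y p) ∈ maxIdealAt y := by
  have := add_mem (Ideal.pow_le_self two_ne_zero (taylor_one y p)) (linPart_mem y p)
  simpa using this

lemma mem_maxIdealAt {d : ℕ} {y : Fin d → ℂ} {p : MvPolynomial (Fin d) ℂ} :
    p ∈ maxIdealAt y ↔ eval y p = 0 := by
  constructor
  · intro h
    have : maxIdealAt y ≤ RingHom.ker (eval y) := by
      rw [maxIdealAt, Ideal.span_le]
      rintro _ ⟨i, rfl⟩
      simp [RingHom.mem_ker]
    exact this h
  · intro h
    simpa [h] using sub_eval_mem y p

/-- The substitution `H(x) ↦ H(x - y)`, which turns a form on tangent vectors into a homogeneous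
expression in the coordinates centred at `y`. -/
noncomputable def shift {d : ℕ} (y : Fin d → ℂ) :
    MvPolynomial (Fin d) ℂ →ₐ[ℂ] MvPolynomial (Fin d) ℂ :=
  aeval fun i => X i - C (y i)

lemma eval_shift {d : ℕ} (y z : Fin d → ℂ) (H : MvPolynomial (Fin d) ℂ) :
    eval z (shift y H) = eval (z - y) H := by
  induction H using MvPolynomial.induction_on with
  | C a => simp [shift]
  | add p q hp hq => simp [hp, hq]
  | mul_X p i hp => rw [map_mul, map_mul, hp]; simp [shift]

/-- Modulo `𝔪^(a+1)`, an element of `𝔪^a` is a form of degree `a` in `x - y`. -/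
lemma exists_leading {d : ℕ} (y : Fin d → ℂ) (a : ℕ) (P : MvPolynomial (Fin d) ℂ)
    (hP : P ∈ maxIdealAt y ^ a) :
    ∃ H : MvPolynomial (Fin d) ℂ, H.IsHomogeneous a ∧ P - shift y H ∈ maxIdealAt y ^ (a + 1) := by
  induction a generalizing P with
  | zero =>
    refine ⟨C (eval y P), isHomogeneous_C _ _, ?_⟩
    simpa [shift] using sub_eval_mem y P
  | succ a ih =>
    rw [pow_succ'] at hP
    refine Submodule.mul_induction_on hP ?_ ?_
    · intro w hw u hu
      obtain ⟨H, hH, hu'⟩ := ih u hu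
      have hw0 := mem_maxIdealAt.1 hw
      have hw2 := taylor_one y w
      rw [hw0, map_zero, sub_zero] at hw2
      set L : MvPolynomial (Fin d) ℂ := ∑ j, C (eval y (pderiv j w)) * X j with hL
      have hLs : shift y L = linPart y w := by
        simp [hL, shift, linPart, MvPolynomial.algebraMap_eq]
      refine ⟨L * H, ?_, ?_⟩
      · rw [add_comm]
        refine IsHomogeneous.mul (IsHomogeneous.sum _ _ _ fun j _ => ?_) hH
        simpa using (isHomogeneous_C (Fin d) (eval y (pderiv j w))).mul (isHomogeneous_X ℂ j)
      · have : w * u - shift y (L * H) =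
            (w - linPart y w) * u + linPart y w * (u - shift y H) := by
          rw [map_mul, hLs]; ring
        rw [this]
        refine add_mem ?_ ?_
        · have := Ideal.mul_mem_mul hw2 hu
          rwa [← pow_add, show 2 + a = a + 1 + 1 by ring] at this
        · have := Ideal.mul_mem_mul (linPart_mem y w) hu'
          rwa [← pow_succ'] at this
    · rintro u v ⟨H, hH, hu⟩ ⟨K, hK, hv⟩
      refine ⟨H + K, hH.add hK, ?_⟩
      have : u + v - shift y (H + K) = (u - shift y H) + (v - shift y K) := by
        rw [map_add]; ring
      rw [this]; exact add_mem hu hv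

lemma IsHomogeneous.eval_smul' {d a : ℕ} {H : MvPolynomial (Fin d) ℂ} (hH : H.IsHomogeneous a)
    (c : ℂ) (x : Fin d → ℂ) : eval (c • x) H = c ^ a * eval x H := by
  rw [eval_eq', eval_eq', Finset.mul_sum]
  refine Finset.sum_congr rfl fun m hm => ?_
  have hm' : ∑ i, m i = a := by
    have := hH (mem_support_iff.1 hm)
    rw [Finsupp.weight_apply, Finsupp.sum_fintype _ _ (by simp)] at this
    simpa only [Pi.one_apply, smul_eq_mul, mul_one] using this
  simp only [Pi.smul_apply, smul_eq_mul, mul_pow, Finset.prod_mul_distrib, Finset.prod_pow_eq_pow_sum,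
    hm']
  ring

/-! ### Curves with a one-sided velocity -/

section Curves

open Filter Topology

/-- The curve `z` leaves `y` with velocity `w`: `z t = y + t w + o(t)` as `t → 0⁺`. -/
def HasRightVelocity {d : ℕ} (z : ℝ → Fin d → ℂ) (y w : Fin d → ℂ) : Prop :=
  Tendsto (fun t : ℝ => (t : ℂ)⁻¹ • (z t - y)) (𝓝[>] 0) (𝓝 w)

lemma HasRightVelocity.tendsto {d : ℕ} {z : ℝ → Fin d → ℂ} {y w : Fin d → ℂ}
    (hz : HasRightVelocity z y w) : Tendsto z (𝓝[>] 0) (𝓝 y) := by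
  have h0 : Tendsto (fun t : ℝ => (t : ℂ)) (𝓝[>] 0) (𝓝 0) := by
    have : Tendsto (fun t : ℝ => (t : ℂ)) (𝓝 0) (𝓝 ((0 : ℝ) : ℂ)) :=
      Complex.continuous_ofReal.tendsto 0
    simpa using this.mono_left nhdsWithin_le_nhds
  have := (h0.smul hz).add_const y
  rw [zero_smul, zero_add] at this
  refine this.congr' ?_
  filter_upwards [self_mem_nhdsWithin] with t ht
  have : (t : ℂ) ≠ 0 := by exact_mod_cast (ne_of_gt ht)
  rw [smul_smul, mul_inv_cancel₀ this, one_smul, sub_add_cancel]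

lemma HasRightVelocity.eval_bdd {d : ℕ} {z : ℝ → Fin d → ℂ} {y w : Fin d → ℂ}
    (hz : HasRightVelocity z y w) (a : ℕ) (P : MvPolynomial (Fin d) ℂ)
    (hP : P ∈ maxIdealAt y ^ a) :
    ∃ L : ℂ, Tendsto (fun t : ℝ => ((t : ℂ) ^ a)⁻¹ * eval (z t) P) (𝓝[>] 0) (𝓝 L) := by
  have hcont (p : MvPolynomial (Fin d) ℂ) :
      Tendsto (fun t : ℝ => eval (z t) p) (𝓝[>] 0) (𝓝 (eval y p)) :=
    ((MvPolynomial.continuous_eval p).tendsto y).comp hz.tendsto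
  induction a generalizing P with
  | zero => exact ⟨_, by simpa using hcont P⟩
  | succ a ih =>
    rw [pow_succ'] at hP
    refine Submodule.mul_induction_on hP ?_ ?_
    · intro g hg u hu
      obtain ⟨L, hL⟩ := ih u hu
      have hg' : ∃ K : ℂ, Tendsto (fun t : ℝ => (t : ℂ)⁻¹ * eval (z t) g) (𝓝[>] 0) (𝓝 K) := by
        refine Submodule.span_induction ?_ ?_ ?_ ?_ hg
        · rintro _ ⟨i, rfl⟩
          refine ⟨w i, ?_⟩
          simpa using (tendsto_pi_nhds.1 hz) i
        · exact ⟨0, by simp⟩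
        · rintro x y _ _ ⟨K, hK⟩ ⟨K', hK'⟩
          exact ⟨K + K', by simpa [mul_add] using hK.add hK'⟩
        · rintro c x _ ⟨K, hK⟩
          refine ⟨_, ((hcont c).mul hK).congr fun t => ?_⟩
          simp only [smul_eq_mul, map_mul]; ring
      obtain ⟨K, hK⟩ := hg'
      refine ⟨_, (hK.mul hL).congr fun t => ?_⟩
      simp only [map_mul, pow_succ', mul_inv]; ring
    · rintro x y ⟨K, hK⟩ ⟨K', hK'⟩
      exact ⟨K + K', by simpa [mul_add] using hK.add hK'⟩

/-- If `P` agrees with the form `H` of degree `a` up to order `a + 1` at `y`, then `H(w)` is the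
leading coefficient of `P` along every curve through `y` with velocity `w`. -/
lemma HasRightVelocity.eval_leading {d : ℕ} {z : ℝ → Fin d → ℂ} {y w : Fin d → ℂ}
    (hz : HasRightVelocity z y w) (a : ℕ) (P H : MvPolynomial (Fin d) ℂ)
    (hH : H.IsHomogeneous a) (hP : P - shift y H ∈ maxIdealAt y ^ (a + 1)) :
    Tendsto (fun t : ℝ => ((t : ℂ) ^ a)⁻¹ * eval (z t) P) (𝓝[>] 0) (𝓝 (eval w H)) := by
  obtain ⟨L, hL⟩ := hz.eval_bdd _ _ hP
  have h0 : Tendsto (fun t : ℝ => (t : ℂ)) (𝓝[>] 0) (𝓝 0) := by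
    have : Tendsto (fun t : ℝ => (t : ℂ)) (𝓝 0) (𝓝 ((0 : ℝ) : ℂ)) :=
      Complex.continuous_ofReal.tendsto 0
    simpa using this.mono_left nhdsWithin_le_nhds
  have h1 : Tendsto (fun t : ℝ => eval ((t : ℂ)⁻¹ • (z t - y)) H) (𝓝[>] 0) (𝓝 (eval w H)) :=
    ((MvPolynomial.continuous_eval H).tendsto w).comp hz
  have := (h0.mul hL).add h1
  rw [zero_mul, zero_add] at this
  refine this.congr' ?_
  filter_upwards [self_mem_nhdsWithin] with t ht
  have ht : (t : ℂ) ≠ 0 := by exact_mod_cast (ne_of_gt ht)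
  rw [IsHomogeneous.eval_smul' hH, map_sub, eval_shift, inv_pow]
  field_simp
  ring

end Curves

/-! ### Equations of the tangent space and tangent vector fields -/

/-- The Jacobian matrix at `x` of the polynomials `P k`. -/
noncomputable def jac {d s : ℕ} (P : Fin s → MvPolynomial (Fin d) ℂ) (x : Fin d → ℂ) :
    Matrix (Fin s) (Fin d) ℂ :=
  Matrix.of fun k j => eval x (pderiv j (P k))

lemma mem_vanishing {d : ℕ} {M : Set (Fin d → ℂ)} {p : MvPolynomial (Fin d) ℂ} :
    p ∈ vanishingIdeal ℂ M ↔ ∀ x ∈ M, eval x p = 0 := by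
  simp [mem_vanishingIdeal_iff, MvPolynomial.aeval_eq_eval]

lemma jac_mulVec {d s : ℕ} (P : Fin s → MvPolynomial (Fin d) ℂ) (x v : Fin d → ℂ) (k : Fin s) :
    (jac P x).mulVec v k = ∑ i, v i * eval x (pderiv i (P k)) := by
  simp [jac, Matrix.mulVec, dotProduct, mul_comm]

lemma tangent_le_ker {d s : ℕ} {M : Set (Fin d → ℂ)} {P : Fin s → MvPolynomial (Fin d) ℂ}
    (hP : ∀ k, P k ∈ vanishingIdeal ℂ M) (x : Fin d → ℂ) :
    TangentSpaceAt M x ≤ LinearMap.ker (jac P x).mulVecLin := by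
  intro v hv
  rw [LinearMap.mem_ker, Matrix.mulVecLin_apply]
  funext k
  rw [jac_mulVec]
  exact hv _ (mem_vanishing.1 (hP k))

/-- `T_yM` is cut out by finitely many polynomials of the ideal of `M` with independent
differentials; the independence is recorded by a right inverse `B` of the Jacobian at `y`. -/
lemma exists_frame {d : ℕ} (M : Set (Fin d → ℂ)) (y : Fin d → ℂ) :
    ∃ (s : ℕ) (P : Fin s → MvPolynomial (Fin d) ℂ) (B : Matrix (Fin d) (Fin s) ℂ),
      (∀ k, P k ∈ vanishingIdeal ℂ M) ∧ jac P y * B = 1 ∧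
        TangentSpaceAt M y = LinearMap.ker (jac P y).mulVecLin := by
  let grad : MvPolynomial (Fin d) ℂ →ₗ[ℂ] (Fin d → ℂ) :=
    { toFun := fun p i => eval y (pderiv i p)
      map_add' := fun p q => by funext i; simp
      map_smul' := fun c p => by funext i; simp }
  let L : Submodule ℂ (Fin d → ℂ) := ((vanishingIdeal ℂ M).restrictScalars ℂ).map grad
  let b := Module.finBasis ℂ L
  have hb : ∀ k, ∃ p ∈ vanishingIdeal ℂ M, grad p = (b k : Fin d → ℂ) := fun k => (b k).2
  choose P hPI hPg using hb
  have hrow : (jac P y).row = fun k => (b k : Fin d → ℂ) := by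
    funext k; rw [← hPg k]; rfl
  have hli : LinearIndependent ℂ (jac P y).row := by
    rw [hrow]
    exact b.linearIndependent.map' L.subtype (Submodule.ker_subtype L)
  have hsurj : Function.Surjective (jac P y).mulVec := by
    have h1 := hli.rank_matrix
    have h2 : LinearMap.range (jac P y).mulVecLin = ⊤ := by
      apply Submodule.eq_top_of_finrank_eq
      rw [← Matrix.rank, h1]; simp
    exact LinearMap.range_eq_top.1 h2
  obtain ⟨B, hB⟩ := Matrix.mulVec_surjective_iff_exists_right_inverse.1 hsurj
  refine ⟨_, P, B, hPI, hB, le_antisymm (tangent_le_ker hPI y) ?_⟩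
  intro v hv p hp
  rw [LinearMap.mem_ker, Matrix.mulVecLin_apply] at hv
  have hpL : grad p ∈ L := ⟨p, mem_vanishing.2 hp, rfl⟩
  have hv' : ∀ k, ∑ i, v i * (b k : Fin d → ℂ) i = 0 := fun k => by
    have := congrFun hv k
    rw [jac_mulVec] at this
    rw [← hPg k]; exact this
  have hrep : grad p = ∑ k, b.repr ⟨_, hpL⟩ k • (b k : Fin d → ℂ) := by
    have h := congrArg Subtype.val (b.sum_repr ⟨_, hpL⟩)
    simp only [Submodule.coe_sum, Submodule.coe_smul] at h
    exact h.symm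
  change ∑ i, v i * grad p i = 0
  rw [hrep]
  simp only [Finset.sum_apply, Pi.smul_apply, smul_eq_mul, Finset.mul_sum]
  rw [Finset.sum_comm]
  refine Finset.sum_eq_zero fun k _ => ?_
  have := congrArg (b.repr ⟨_, hpL⟩ k * ·) (hv' k)
  simp only [Finset.mul_sum, mul_zero] at this
  rw [← this]
  exact Finset.sum_congr rfl fun i _ => by ring

/-- At a point where the tangent dimension is minimal, every tangent vector extends to a polynomial
vector field tangent to `M`.  Let `J` be the Jacobian matrix of equations cutting out `T_yM` and `B`
a right inverse of `J(y)`.  With `N = J B`, the field is `det(N)² v - det(N) B adj(N) J v`, a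
multiple of the projection of `v` to `ker J` along the range of `B`; where `det N ≠ 0`, minimality
forces `T_xM = ker J(x)`. -/
lemma exists_field {d : ℕ} (M : Set (Fin d → ℂ)) (y : Fin d → ℂ)
    (hsmooth : ∀ x ∈ M, Module.finrank ℂ (TangentSpaceAt M y) ≤
      Module.finrank ℂ (TangentSpaceAt M x))
    (v : Fin d → ℂ) (hv : v ∈ TangentSpaceAt M y) :
    ∃ D : Fin d → MvPolynomial (Fin d) ℂ, (fun i => eval y (D i)) = v ∧
      ∀ x ∈ M, (fun i => eval x (D i)) ∈ TangentSpaceAt M x := by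
  obtain ⟨s, P, B, hPI, hB, hT⟩ := exists_frame M y
  let J : Matrix (Fin s) (Fin d) (MvPolynomial (Fin d) ℂ) := Matrix.of fun k j => pderiv j (P k)
  let B' : Matrix (Fin d) (Fin s) (MvPolynomial (Fin d) ℂ) := B.map C
  let N : Matrix (Fin s) (Fin s) (MvPolynomial (Fin d) ℂ) := J * B'
  let Q : Matrix (Fin d) (Fin d) (MvPolynomial (Fin d) ℂ) := B' * (N.adjugate * J)
  let D : Fin d → MvPolynomial (Fin d) ℂ :=
    N.det ^ 2 • (fun i => C (v i)) -
      N.det • Q.mulVec (fun i => C (v i))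
  have hJ (x) : J.map (eval x) = jac P x := rfl
  have hBx (x : Fin d → ℂ) : B'.map (eval x) = B := by ext; simp [B']
  have hN (x) : N.map (eval x) = jac P x * B := by
    rw [Matrix.map_mul, hJ, hBx]
  have hdet (x) : eval x N.det = (jac P x * B).det := by
    rw [← hN, RingHom.map_det, RingHom.mapMatrix_apply]
  have hadj (x) : N.adjugate.map (eval x) = (jac P x * B).adjugate := by
    rw [← hN]
    exact RingHom.map_adjugate (eval x) N
  have hQ (x) : Q.map (eval x) = B * ((jac P x * B).adjugate * jac P x) := by
    rw [Matrix.map_mul, Matrix.map_mul, hJ, hBx, hadj]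
  have hCv (x : Fin d → ℂ) : (eval x ∘ fun i => C (v i)) = v := by funext j; simp
  have hD (x) : (fun i => eval x (D i)) = (jac P x * B).det ^ 2 • v -
      (jac P x * B).det • (B * ((jac P x * B).adjugate * jac P x)).mulVec v := by
    funext i
    simp only [D, Pi.sub_apply, Pi.smul_apply, smul_eq_mul, map_sub, map_mul, map_pow, hdet,
      eval_C, RingHom.map_mulVec, hQ, hCv]
  refine ⟨D, ?_, fun x hx => ?_⟩
  · have hv0 : (jac P y).mulVec v = 0 := by
      rw [hT] at hv; exact hv
    rw [hD, hB, ← Matrix.mulVec_mulVec, ← Matrix.mulVec_mulVec, hv0]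
    simp
  · rw [hD]
    by_cases h0 : (jac P x * B).det = 0
    · rw [h0]; simp
    · have hsurj : ∀ x, (jac P x * B).det ≠ 0 →
          Module.finrank ℂ (LinearMap.ker (jac P x).mulVecLin) + s = d := by
        intro x hx
        have h2 : LinearMap.range (jac P x).mulVecLin = ⊤ := by
          rw [LinearMap.range_eq_top]
          apply Matrix.mulVec_surjective_iff_exists_right_inverse.2
          refine ⟨B * (jac P x * B)⁻¹, ?_⟩
          rw [← Matrix.mul_assoc, Matrix.mul_nonsing_inv _ (isUnit_iff_ne_zero.2 hx)]
        have := LinearMap.finrank_range_add_finrank_ker (jac P x).mulVecLin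
        rw [h2] at this
        simp at this
        omega
      have hTx : TangentSpaceAt M x = LinearMap.ker (jac P x).mulVecLin := by
        apply Submodule.eq_of_le_of_finrank_le (tangent_le_ker hPI x)
        have h1 := hsurj x h0
        have h2 := hsurj y (by rw [hB]; simp)
        have h3 := hsmooth x hx
        rw [hT] at h3
        omega
      rw [hTx, LinearMap.mem_ker, Matrix.mulVecLin_apply, Matrix.mulVec_sub, Matrix.mulVec_smul,
        Matrix.mulVec_smul, Matrix.mulVec_mulVec, ← Matrix.mul_assoc, ← Matrix.mul_assoc,
        Matrix.mul_adjugate, Matrix.smul_mul, Matrix.one_mul, Matrix.smul_mulVec, smul_smul,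
        ← pow_two, sub_self]

/-! ### Curves in the variety -/

section Arcs

open Filter Topology

lemma hasDerivAt_eval {d : ℕ} {z : ℝ → Fin d → ℂ} {z' : Fin d → ℂ} {t : ℝ}
    (hz : HasDerivAt z z' t) (p : MvPolynomial (Fin d) ℂ) :
    HasDerivAt (fun t => eval (z t) p) (∑ i, z' i * eval (z t) (pderiv i p)) t := by
  induction p using MvPolynomial.induction_on with
  | C a => simpa using hasDerivAt_const t a
  | add p q hp hq =>
    simp only [map_add, mul_add, Finset.sum_add_distrib]
    exact hp.add hq
  | mul_X p i hp =>
    have := hp.mul ((hasDerivAt_pi.1 hz) i)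
    simp only [map_mul, eval_X]
    refine this.congr_deriv (Eq.symm ?_)
    simp only [pderiv_mul, map_add, map_mul, eval_X, mul_add, Finset.sum_add_distrib]
    congr 1
    · rw [Finset.sum_mul]; exact Finset.sum_congr rfl fun j _ => by ring
    · rw [Finset.sum_eq_single i]
      · simp; ring
      · intro j _ hj; simp [pderiv_X_of_ne hj.symm]
      · simp

/-- At a point of minimal tangent dimension, every tangent vector is the velocity of a curve
in `M`: an integral curve of a polynomial field tangent to `M` stays in `M`, since the values along
it of generators of the ideal of `M` solve a linear homogeneous ODE with zero initial value. -/
lemma exists_curve {d : ℕ} (M : Set (Fin d → ℂ)) (I : Set (MvPolynomial (Fin d) ℂ))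
    (hclosed : M = {x | ∀ p ∈ I, eval x p = 0}) (y : Fin d → ℂ) (hy : y ∈ M)
    (hsmooth : ∀ x ∈ M, Module.finrank ℂ (TangentSpaceAt M y) ≤
      Module.finrank ℂ (TangentSpaceAt M x))
    (v : Fin d → ℂ) (hv : v ∈ TangentSpaceAt M y) :
    ∃ z : ℝ → Fin d → ℂ, HasRightVelocity z y v ∧ ∀ᶠ t in 𝓝[>] 0, z t ∈ M := by
  obtain ⟨D, hDy, hD⟩ := exists_field M y hsmooth v hv
  have hsm : ContDiffAt ℝ 1 (fun x : Fin d → ℂ => fun i => eval x (D i)) y := by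
    rw [contDiffAt_pi]
    intro i
    exact ((AnalyticOnNhd.eval_mvPolynomial (𝕜 := ℂ) (D i)) y (Set.mem_univ _)).contDiffAt.restrict_scalars ℝ
  obtain ⟨z, hz0, ε, hε, hz⟩ :=
    hsm.exists_forall_mem_closedBall_exists_eq_forall_mem_Ioo_hasDerivAt₀ 0
  simp only [zero_sub, zero_add] at hz
  refine ⟨z, ?_, ?_⟩
  · have h := hz 0 ⟨by linarith, hε⟩
    rw [hz0, hDy] at h
    have h' := h.tendsto_slope_zero_right
    refine h'.congr fun t => ?_
    rw [zero_add, hz0, ← Complex.ofReal_inv]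
    ext i; simp
  · obtain ⟨S, hS⟩ := (isNoetherianRing_iff_ideal_fg _).1
      (inferInstance : IsNoetherianRing (MvPolynomial (Fin d) ℂ)) (vanishingIdeal ℂ M)
    have hSI : ∀ f : S, (f : MvPolynomial (Fin d) ℂ) ∈ vanishingIdeal ℂ M := fun f => by
      rw [← hS]; exact Ideal.subset_span f.2
    have hDer : ∀ f : S, ∃ a : S → MvPolynomial (Fin d) ℂ,
        ∑ g : S, a g * (g : MvPolynomial (Fin d) ℂ) = ∑ i, D i * pderiv i (f : MvPolynomial (Fin d) ℂ) := by
      intro f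
      have hmem : ∑ i, D i * pderiv i (f : MvPolynomial (Fin d) ℂ) ∈ vanishingIdeal ℂ M := by
        rw [mem_vanishing]
        intro x hx
        have := hD x hx f (mem_vanishing.1 (hSI f))
        simpa using this
      rw [← hS, ← Subtype.range_coe (s := (S : Set (MvPolynomial (Fin d) ℂ)))] at hmem
      obtain ⟨c, hc⟩ := (Submodule.mem_span_range_iff_exists_fun _).1 hmem
      exact ⟨c, by simpa using hc⟩
    choose a ha using hDer
    set u : ℝ → S → ℂ := fun t f => eval (z t) (f : MvPolynomial (Fin d) ℂ) with hu
    set u' : ℝ → S → ℂ := fun t f => ∑ g : S, eval (z t) (a f g) * u t g with hu'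
    have hder : ∀ t ∈ Set.Ioo (-ε) ε, HasDerivAt u (u' t) t := by
      intro t ht
      rw [hasDerivAt_pi]
      intro f
      refine (hasDerivAt_eval (hz t ht) (f : MvPolynomial (Fin d) ℂ)).congr_deriv (Eq.symm ?_)
      have := congrArg (eval (z t)) (ha f)
      simp only [map_sum, map_mul] at this
      exact this
    have hsub : Set.Icc 0 (ε / 2) ⊆ Set.Ioo (-ε) ε := fun t ht =>
      ⟨by linarith [ht.1], by linarith [ht.2]⟩
    have hzc : ContinuousOn z (Set.Icc 0 (ε / 2)) := fun t ht =>
      (hz t (hsub ht)).continuousAt.continuousWithinAt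
    obtain ⟨K, hK⟩ := isCompact_Icc.exists_bound_of_continuousOn
      (f := fun t => ∑ f : S, ∑ g : S, ‖eval (z t) (a f g)‖) (by
        refine continuousOn_finsetSum _ fun f _ => continuousOn_finsetSum _ fun g _ => ?_
        exact ((MvPolynomial.continuous_eval (a f g)).comp_continuousOn hzc).norm)
    have hzero := eq_zero_of_abs_deriv_le_mul_abs_self_of_eq_zero_right (f := u) (f' := u')
      (K := K) (a := 0) (b := ε / 2)
      (fun t ht => (hder t (hsub ht)).continuousAt.continuousWithinAt)
      (fun t ht => (hder t (hsub ⟨ht.1, ht.2.le⟩)).hasDerivWithinAt)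
      (by funext f; simp only [hu, hz0]; exact mem_vanishing.1 (hSI f) y hy)
      (by
        intro t ht
        have hKt := hK t ⟨ht.1, ht.2.le⟩
        rw [Real.norm_of_nonneg (by positivity)] at hKt
        have hK0 : 0 ≤ K := le_trans (by positivity) hKt
        rw [pi_norm_le_iff_of_nonneg (by positivity)]
        intro f
        calc ‖u' t f‖ ≤ ∑ g : S, ‖eval (z t) (a f g)‖ * ‖u t‖ := by
              refine (norm_sum_le _ _).trans (Finset.sum_le_sum fun g _ => ?_)
              rw [norm_mul]
              gcongr
              exact norm_le_pi_norm (u t) g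
          _ = (∑ g : S, ‖eval (z t) (a f g)‖) * ‖u t‖ := by rw [Finset.sum_mul]
          _ ≤ K * ‖u t‖ := by
              gcongr
              refine le_trans ?_ hKt
              exact Finset.single_le_sum (f := fun f => ∑ g : S, ‖eval (z t) (a f g)‖)
                (fun _ _ => by positivity) (Finset.mem_univ f))
    have hmem : Set.Ioo 0 (ε / 2) ∈ 𝓝[>] (0 : ℝ) := Ioo_mem_nhdsGT (by linarith)
    filter_upwards [hmem] with t ht
    have h0 := hzero t ⟨ht.1.le, ht.2.le⟩
    rw [hclosed]
    intro p hp
    have hpI : p ∈ vanishingIdeal ℂ M := by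
      rw [mem_vanishing, hclosed]; exact fun x hx => hx p hp
    have hle : vanishingIdeal ℂ M ≤ RingHom.ker (eval (z t)) := by
      rw [← hS, Ideal.span_le]
      intro f hf
      exact congrFun h0 ⟨f, hf⟩
    exact hle hpI

end Arcs

/-! ### Order of vanishing at `y` modulo the ideal of `M` -/

lemma mul_mem_pow_sup {R : Type*} [CommRing R] {m I : Ideal R} {i j : ℕ} {x u : R}
    (hx : x ∈ m ^ i ⊔ I) (hu : u ∈ m ^ j) : x * u ∈ m ^ (i + j) ⊔ I := by
  obtain ⟨a, ha, b, hb, rfl⟩ := Submodule.mem_sup.1 hx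
  rw [add_mul, pow_add]
  exact add_mem (Ideal.mem_sup_left (Ideal.mul_mem_mul ha hu))
    (Ideal.mem_sup_right (Ideal.mul_mem_right _ _ hb))

lemma eval_linPart {d : ℕ} (x y : Fin d → ℂ) (p : MvPolynomial (Fin d) ℂ) :
    eval x (linPart y p) = ∑ j, (x - y) j * eval y (pderiv j p) := by
  simp [linPart, mul_comm]

/-- A form of degree `a` vanishing on `T_yM` belongs to `𝔪^(a+1)` modulo the ideal of `M`.  The
substitution `σ` of the affine projection onto `y + T_yM` kills such a form, while it moves each
coordinate, hence each element of `𝔪`, by an element of `𝔪² + I(M)`. -/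
lemma shift_mem_of_vanish {d : ℕ} (M : Set (Fin d → ℂ)) (y : Fin d → ℂ) (hy : y ∈ M)
    (a : ℕ) (H : MvPolynomial (Fin d) ℂ) (hmem : shift y H ∈ maxIdealAt y ^ a)
    (hvan : ∀ v ∈ TangentSpaceAt M y, eval v H = 0) :
    shift y H ∈ maxIdealAt y ^ (a + 1) ⊔ vanishingIdeal ℂ M := by
  obtain ⟨s, P, B, hPI, hB, hT⟩ := exists_frame M y
  set m := maxIdealAt y with hm
  set I := vanishingIdeal ℂ M with hI
  let σ : MvPolynomial (Fin d) ℂ →ₐ[ℂ] MvPolynomial (Fin d) ℂ :=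
    aeval fun i => X i - ∑ k, C (B i k) * linPart y (P k)
  have hσX (i) : σ (X i) = X i - ∑ k, C (B i k) * linPart y (P k) := by simp [σ]
  have hσC (c) : σ (C c) = C c := by simp [σ]
  have hσeval (x) (p) : eval x (σ p) =
      eval (x - B.mulVec ((jac P y).mulVec (x - y))) p := by
    induction p using MvPolynomial.induction_on with
    | C c => rw [hσC]; simp
    | add p q hp hq => rw [map_add, map_add, map_add, hp, hq]
    | mul_X p i hp =>
      rw [map_mul, map_mul, map_mul, hp, hσX]
      congr 1
      simp only [map_sub, eval_X, map_sum, map_mul, eval_C, eval_linPart, Pi.sub_apply,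
        Matrix.mulVec, dotProduct, jac, Matrix.of_apply]
      congr 1
      refine Finset.sum_congr rfl fun k _ => ?_
      congr 1
      exact Finset.sum_congr rfl fun j _ => mul_comm _ _
  have hσy (p) : eval y (σ p) = eval y p := by rw [hσeval]; simp
  have hσ0 : σ (shift y H) = 0 := by
    apply MvPolynomial.funext
    intro x
    rw [hσeval, eval_shift, map_zero]
    apply hvan
    rw [hT, LinearMap.mem_ker, Matrix.mulVecLin_apply, sub_right_comm, Matrix.mulVec_sub,
      Matrix.mulVec_mulVec, hB, Matrix.one_mulVec, sub_self]
  have hσm {w} (hw : w ∈ m) : σ w ∈ m := mem_maxIdealAt.2 ((hσy w).trans (mem_maxIdealAt.1 hw))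
  have hdiff (u) : u - σ u ∈ m := mem_maxIdealAt.2 (by rw [map_sub, hσy, sub_self])
  have hlin (k) : linPart y (P k) ∈ m ^ 2 ⊔ I := by
    have h1 := taylor_one y (P k)
    rw [mem_vanishing.1 (hPI k) y hy, map_zero, sub_zero] at h1
    have : linPart y (P k) = -(P k - linPart y (P k)) + P k := by ring
    rw [this]
    exact add_mem (Ideal.mem_sup_left (neg_mem h1)) (Ideal.mem_sup_right (hPI k))
  have hone {w} (hw : w ∈ m) : w - σ w ∈ m ^ 2 ⊔ I := by
    refine Submodule.span_induction ?_ ?_ ?_ ?_ hw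
    · rintro _ ⟨i, rfl⟩
      simp only [map_sub, hσX, hσC]
      have : X i - C (y i) - (X i - ∑ k, C (B i k) * linPart y (P k) - C (y i)) =
        ∑ k, C (B i k) * linPart y (P k) := by ring
      rw [this]
      exact Ideal.sum_mem _ fun k _ => Ideal.mul_mem_left _ _ (hlin k)
    · simp
    · intro p q _ _ hp hq
      have : p + q - σ (p + q) = (p - σ p) + (q - σ q) := by rw [map_add]; ring
      rw [this]; exact add_mem hp hq
    · intro c p hp' hp
      have : c • p - σ (c • p) = (c - σ c) * p + σ c * (p - σ p) := by
        simp only [smul_eq_mul, map_mul]; ring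
      rw [this]
      refine add_mem (Ideal.mem_sup_left ?_) (Ideal.mul_mem_left _ _ hp)
      rw [pow_two]
      exact Ideal.mul_mem_mul (hdiff c) hp'
  have key : ∀ (a : ℕ) (u), u ∈ m ^ a → u - σ u ∈ m ^ (a + 1) ⊔ I := by
    intro a
    induction a with
    | zero => intro u _; exact Ideal.mem_sup_left (by simpa using hdiff u)
    | succ a ih =>
      intro u hu
      rw [pow_succ'] at hu
      refine Submodule.mul_induction_on hu ?_ ?_
      · intro w hw u hu
        have : w * u - σ (w * u) = (w - σ w) * u + (u - σ u) * σ w := by rw [map_mul]; ring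
        rw [this]
        refine add_mem ?_ ?_
        · have := mul_mem_pow_sup (hone hw) hu
          rwa [show 2 + a = a + 1 + 1 by ring] at this
        · exact mul_mem_pow_sup (j := 1) (ih u hu) (by simpa using hσm hw)
      · intro p q hp hq
        have : p + q - σ (p + q) = (p - σ p) + (q - σ q) := by rw [map_add]; ring
        rw [this]; exact add_mem hp hq
  simpa [hσ0] using key a _ hmem

/-- Krull's intersection theorem in the coordinate ring of `M`. -/
lemma exists_not_mem_pow_sup {d : ℕ} (M : Set (Fin d → ℂ)) (y : Fin d → ℂ) (hy : y ∈ M)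
    (hirr : ∀ p q : MvPolynomial (Fin d) ℂ, (∀ x ∈ M, eval x p * eval x q = 0) →
      (∀ x ∈ M, eval x p = 0) ∨ (∀ x ∈ M, eval x q = 0))
    (p : MvPolynomial (Fin d) ℂ) (hp : p ∉ vanishingIdeal ℂ M) :
    ∃ n, p ∉ maxIdealAt y ^ n ⊔ vanishingIdeal ℂ M := by
  set I := vanishingIdeal ℂ M with hI
  have hle : I ≤ maxIdealAt y := fun f hf => mem_maxIdealAt.2 (mem_vanishing.1 hf y hy)
  have hone : (1 : MvPolynomial (Fin d) ℂ) ∉ maxIdealAt y := fun h => by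
    simpa using mem_maxIdealAt.1 h
  have hprime : I.IsPrime := by
    refine ⟨fun h => hone (hle (h ▸ Submodule.mem_top)), fun {f g} hfg => ?_⟩
    have := hirr f g fun x hx => by rw [← map_mul]; exact mem_vanishing.1 hfg x hx
    exact this.imp mem_vanishing.2 mem_vanishing.2
  have hmtop : (maxIdealAt y).map (Ideal.Quotient.mk I) ≠ ⊤ := by
    intro h
    have h1 : (1 : MvPolynomial (Fin d) ℂ) ∈
        ((maxIdealAt y).map (Ideal.Quotient.mk I)).comap (Ideal.Quotient.mk I) := by
      rw [h]; trivial
    rw [Ideal.comap_map_of_surjective _ Ideal.Quotient.mk_surjective, ← RingHom.ker_eq_comap_bot,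
      Ideal.mk_ker, sup_eq_left.2 hle] at h1
    exact hone h1
  by_contra! hall
  apply hp
  rw [← Ideal.Quotient.eq_zero_iff_mem, ← Ideal.mem_bot,
    ← Ideal.iInf_pow_eq_bot_of_isDomain _ hmtop, Ideal.mem_iInf]
  intro n
  rw [← Ideal.map_pow]
  obtain ⟨a, ha, b, hb, hab⟩ := Submodule.mem_sup.1 (hall n)
  rw [← hab, map_add, Ideal.Quotient.eq_zero_iff_mem.2 hb, add_zero]
  exact Ideal.mem_map_of_mem _ ha

/-! ### Leading forms on the tangent space -/

/-- The form `H` of degree `a` represents, on `T_yM`, the leading term of `p|_M` at `y`: it is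
the coefficient of `t ^ a` along all curves in `M` leaving `y`, in terms of their velocity. -/
def IsLeadingForm {d : ℕ} (M : Set (Fin d → ℂ)) (y : Fin d → ℂ) (p : MvPolynomial (Fin d) ℂ)
    (a : ℕ) (H : MvPolynomial (Fin d) ℂ) : Prop :=
  H.IsHomogeneous a ∧ ∀ (z : ℝ → Fin d → ℂ) (w : Fin d → ℂ), HasRightVelocity z y w →
    (∀ᶠ t in nhdsWithin 0 (Set.Ioi 0), z t ∈ M) →
    Filter.Tendsto (fun t : ℝ => ((t : ℂ) ^ a)⁻¹ * eval (z t) p)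
      (nhdsWithin 0 (Set.Ioi 0)) (nhds (eval w H))

/-- A polynomial not vanishing identically on the irreducible `M` has a leading form that is
nonzero on `T_yM`. -/
lemma exists_leadingForm {d : ℕ} (M : Set (Fin d → ℂ)) (y : Fin d → ℂ) (hy : y ∈ M)
    (hirr : ∀ p q : MvPolynomial (Fin d) ℂ, (∀ x ∈ M, eval x p * eval x q = 0) →
      (∀ x ∈ M, eval x p = 0) ∨ (∀ x ∈ M, eval x q = 0))
    (p : MvPolynomial (Fin d) ℂ) (hp : ¬ ∀ x ∈ M, eval x p = 0) :
    ∃ a H, IsLeadingForm M y p a H ∧ ∃ v ∈ TangentSpaceAt M y, eval v H ≠ 0 := by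
  classical
  have hex := exists_not_mem_pow_sup M y hy hirr p (fun h => hp (mem_vanishing.1 h))
  obtain ⟨a, ha⟩ : ∃ a, Nat.find hex = a + 1 := by
    refine Nat.exists_eq_succ_of_ne_zero fun h0 => ?_
    have := Nat.find_spec hex
    rw [h0] at this
    simp at this
  have hmem := not_not.1 (Nat.find_min hex (m := a) (by omega))
  have hnot := Nat.find_spec hex
  rw [ha] at hnot
  obtain ⟨P, hP, g, hg, rfl⟩ := Submodule.mem_sup.1 hmem
  obtain ⟨H, hH, hPH⟩ := exists_leading y a P hP
  refine ⟨a, H, ⟨hH, fun z w hz hzM => ?_⟩, ?_⟩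
  · refine (hz.eval_leading a P H hH hPH).congr' ?_
    filter_upwards [hzM] with t ht
    rw [map_add, mem_vanishing.1 hg _ ht, add_zero]
  · by_contra! hvan
    apply hnot
    have hsh : shift y H ∈ maxIdealAt y ^ a := by
      have := sub_mem hP (Ideal.pow_le_pow_right (Nat.le_succ a) hPH)
      simpa using this
    have h1 := shift_mem_of_vanish M y hy a H hsh hvan
    have : P + g = (P - shift y H) + (shift y H + g) := by ring
    rw [this]
    exact add_mem (Ideal.mem_sup_left hPH) (add_mem h1 (Ideal.mem_sup_right hg))

/-! ### The Zariski closure and its open orbit -/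

section Orbit

open Filter Topology

/-- The differential of a polynomial map carries velocities to velocities. -/
lemma HasRightVelocity.map {d : ℕ} {z : ℝ → Fin d → ℂ} {y w : Fin d → ℂ}
    (hz : HasRightVelocity z y w) (F : Fin d → MvPolynomial (Fin d) ℂ)
    (hF : (fun i => eval y (F i)) = y) :
    HasRightVelocity (fun t i => eval (z t) (F i)) y
      ((Matrix.of fun i j => eval y (pderiv j (F i))).mulVec w) := by
  refine tendsto_pi_nhds.2 fun i => ?_
  set L : MvPolynomial (Fin d) ℂ := ∑ j, C (eval y (pderiv j (F i))) * X j with hL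
  have hLhom : L.IsHomogeneous 1 := by
    refine IsHomogeneous.sum _ _ _ fun j _ => ?_
    simpa using (isHomogeneous_C (Fin d) (eval y (pderiv j (F i)))).mul (isHomogeneous_X ℂ j)
  have hLsh : shift y L = linPart y (F i) := by
    simp [hL, shift, linPart, MvPolynomial.algebraMap_eq]
  have key := hz.eval_leading 1 (F i - C (eval y (F i))) L hLhom
    (by rw [hLsh]; exact taylor_one y (F i))
  have hlim : eval w L = (Matrix.of fun i j => eval y (pderiv j (F i))).mulVec w i := by
    simp [hL, Matrix.mulVec, dotProduct]
  rw [hlim] at key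
  refine key.congr fun t => ?_
  have := congrFun hF i
  simp only [this, map_sub, eval_C, pow_one, Pi.smul_apply, Pi.sub_apply, smul_eq_mul]

/-- A relation between values of `p` and `q` along two curves in `M` passes to the values of
their leading forms at the velocities. -/
lemma IsLeadingForm.relation {d a b : ℕ} {M : Set (Fin d → ℂ)} {y : Fin d → ℂ}
    {p q P Q : MvPolynomial (Fin d) ℂ} (hP : IsLeadingForm M y p a P)
    (hQ : IsLeadingForm M y q b Q) {z z' : ℝ → Fin d → ℂ} {w w' : Fin d → ℂ}
    (hz : HasRightVelocity z y w) (hz' : HasRightVelocity z' y w')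
    (hM : ∀ᶠ t in 𝓝[>] 0, z t ∈ M) (hM' : ∀ᶠ t in 𝓝[>] 0, z' t ∈ M)
    (hrel : ∀ᶠ t in 𝓝[>] 0, eval (z' t) p * eval (z t) q = eval (z t) p * eval (z' t) q) :
    eval w' P * eval w Q = eval w P * eval w' Q := by
  refine tendsto_nhds_unique ((hP.2 z' w' hz' hM').mul (hQ.2 z w hz hM))
    (((hP.2 z w hz hM).mul (hQ.2 z' w' hz' hM')).congr' ?_)
  filter_upwards [hrel] with t ht
  linear_combination (-((t : ℂ) ^ a)⁻¹ * ((t : ℂ) ^ b)⁻¹) * ht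

/-- A linear relation between two polynomials on the `Γ`-orbit of `v₀` persists on the orbit
of `v₀` under the Zariski closure. -/
lemma relation_closure {r : ℕ} {Γ : Type*} [Group Γ] (τ : Γ →* GL (Fin r) ℂ)
    (f g : MvPolynomial (Fin r) ℂ) (α β : ℂ) (v₀ : Fin r → ℂ)
    (h : ∀ γ, eval ((τ γ : Matrix (Fin r) (Fin r) ℂ).mulVec v₀) f * α =
      β * eval ((τ γ : Matrix (Fin r) (Fin r) ℂ).mulVec v₀) g)
    (m : Matrix (Fin r) (Fin r) ℂ) (hm : m ∈ monodromyClosure τ) :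
    eval (m.mulVec v₀) f * α = β * eval (m.mulVec v₀) g := by
  let o : MvPolynomial (Fin r) ℂ →ₐ[ℂ] MvPolynomial (Fin r × Fin r) ℂ :=
    aeval fun i => ∑ j, X (i, j) * C (v₀ j)
  have ho (n : Matrix (Fin r) (Fin r) ℂ) (u) :
      eval (fun ij => n ij.1 ij.2) (o u) = eval (n.mulVec v₀) u := by
    induction u using MvPolynomial.induction_on with
    | C c => simp [o, MvPolynomial.algebraMap_eq]
    | add p q hp hq => simp only [map_add, hp, hq]
    | mul_X p i hp =>
      rw [map_mul, map_mul, map_mul, hp]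
      simp [o, Matrix.mulVec, dotProduct]
  have := hm.1 (o f * C α - C β * o g) (by
    rintro _ ⟨γ, rfl⟩
    simp [ho, h])
  simpa [ho, sub_eq_zero] using this

/-- Two polynomials in the same ratio along an orbit whose Zariski closure has an open orbit
are proportional. -/
lemma proportional_of_relation {r : ℕ} {Γ : Type*} [Group Γ] (τ : Γ →* GL (Fin r) ℂ)
    (f g : MvPolynomial (Fin r) ℂ) (v₀ : Fin r → ℂ)
    (hopen : IsOpen {w : Fin r → ℂ | ∃ g ∈ monodromyClosure τ, g.mulVec v₀ = w})
    (hg : g ≠ 0)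
    (h : ∀ γ v, eval ((τ γ : Matrix (Fin r) (Fin r) ℂ).mulVec v) f * eval v g =
      eval v f * eval ((τ γ : Matrix (Fin r) (Fin r) ℂ).mulVec v) g) :
    ∃ c : ℂ, f = C c * g := by
  set O := {w : Fin r → ℂ | ∃ g ∈ monodromyClosure τ, g.mulVec v₀ = w} with hO
  have hv₀ : v₀ ∈ O := ⟨1, ⟨fun p hp => hp 1 ⟨1, by simp⟩, isUnit_one⟩, by simp⟩
  -- a polynomial vanishing on the open orbit is zero
  have hzero (u : MvPolynomial (Fin r) ℂ) (hu : ∀ w ∈ O, eval w u = 0) : u = 0 := by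
    apply MvPolynomial.funext
    have han := AnalyticOnNhd.eval_mvPolynomial (𝕜 := ℂ) u
    have := han.eq_of_eventuallyEq (g := fun _ => (0 : ℂ)) analyticOnNhd_const (z₀ := v₀)
      (by filter_upwards [hopen.mem_nhds hv₀] with w hw using hu w hw)
    intro x
    simpa using congrFun this x
  have h1 (γ δ) : eval ((τ γ : Matrix (Fin r) (Fin r) ℂ).mulVec v₀) f *
      eval ((τ δ : Matrix (Fin r) (Fin r) ℂ).mulVec v₀) g =
      eval ((τ δ : Matrix (Fin r) (Fin r) ℂ).mulVec v₀) f *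
      eval ((τ γ : Matrix (Fin r) (Fin r) ℂ).mulVec v₀) g := by
    have := h (γ * δ⁻¹) ((τ δ : Matrix (Fin r) (Fin r) ℂ).mulVec v₀)
    rwa [Matrix.mulVec_mulVec, ← Units.val_mul, ← map_mul, inv_mul_cancel_right] at this
  have h2 (δ) (m) (hm : m ∈ monodromyClosure τ) := relation_closure τ f g _ _ v₀ (h1 · δ) m hm
  have h3 (m) (hm : m ∈ monodromyClosure τ) := relation_closure τ f g
    (eval (m.mulVec v₀) g) (eval (m.mulVec v₀) f) v₀ (fun δ => (h2 δ m hm).symm)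
  obtain ⟨w, hw, hgw⟩ : ∃ w ∈ O, eval w g ≠ 0 := by
    by_contra! hall
    exact hg (hzero g hall)
  refine ⟨eval w f / eval w g, sub_eq_zero.1 (hzero _ ?_)⟩
  rintro _ ⟨m', hm', rfl⟩
  obtain ⟨m, hm, rfl⟩ := hw
  have := h3 m hm m' hm'
  rw [map_sub, map_mul, eval_C, sub_eq_zero, div_mul_eq_mul_div, eq_div_iff hgw, this]

end Orbit

/-- Let a finitely presented group `Γ` act by algebraic automorphisms on
an irreducible affine complex variety `M ⊆ ℂ^d`, fixing a point `y` of the smooth locus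
(encoded: the tangent space at `y` has minimal dimension among points of `M`).  Suppose the
induced linear action `τ` of `Γ` on the tangent space `T_yM ≅ ℂ^r` (intertwined with the
differentials at `y` of the polynomial maps giving the action) has Zariski closure
`G ⊆ GL(T_yM)` acting on `T_yM` with an open orbit, and that the identity component `G°`
has no nontrivial characters.  Then there is no nonconstant `Γ`-invariant rational function
on `M`. -/
theorem no_invariant_rational_function
    {d r : ℕ} {Γ : Type*} [Group Γ] (hΓ : GroupFinitelyPresented Γ)
    (M : Set (Fin d → ℂ))
    (I : Set (MvPolynomial (Fin d) ℂ))
    (hclosed : M = {x | ∀ p ∈ I, eval x p = 0})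
    (hne : M.Nonempty)
    (hirr : ∀ p q : MvPolynomial (Fin d) ℂ,
      (∀ x ∈ M, eval x p * eval x q = 0) →
      (∀ x ∈ M, eval x p = 0) ∨ (∀ x ∈ M, eval x q = 0))
    -- the action, by automorphisms given by the polynomial maps `F γ`
    (act : Γ →* Equiv.Perm {x : Fin d → ℂ // x ∈ M})
    (F : Γ → Fin d → MvPolynomial (Fin d) ℂ)
    (hF : ∀ (γ : Γ) (x : {x : Fin d → ℂ // x ∈ M}),
      ((act γ x : {x : Fin d → ℂ // x ∈ M}) : Fin d → ℂ) =
        fun i => eval (x : Fin d → ℂ) (F γ i))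
    -- a fixed point `y`, lying in the smooth locus of `M`
    (y : {x : Fin d → ℂ // x ∈ M})
    (hfix : ∀ γ : Γ, act γ y = y)
    (hsmooth : ∀ x : {x : Fin d → ℂ // x ∈ M},
      Module.finrank ℂ (TangentSpaceAt M (y : Fin d → ℂ)) ≤
        Module.finrank ℂ (TangentSpaceAt M (x : Fin d → ℂ)))
    -- the induced linear action on `T_yM ≅ ℂ^r`, via the differentials at `y`
    (τ : Γ →* GL (Fin r) ℂ)
    (ι : (Fin r → ℂ) →ₗ[ℂ] (Fin d → ℂ))
    (hιinj : Function.Injective ι)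
    (hιrange : LinearMap.range ι = TangentSpaceAt M (y : Fin d → ℂ))
    (hcompat : ∀ (γ : Γ) (v : Fin r → ℂ),
      (Matrix.of fun i j => eval (y : Fin d → ℂ) (pderiv j (F γ i))).mulVec (ι v) =
        ι ((τ γ : Matrix (Fin r) (Fin r) ℂ).mulVec v))
    -- the Zariski closure `G` of the image of `τ` acts with an open orbit on the tangent
    -- space
    (hopen : ∃ v : Fin r → ℂ,
      IsOpen {w : Fin r → ℂ | ∃ g ∈ monodromyClosure τ, g.mulVec v = w})
    -- the identity component `G°` of `G` has no nontrivial characters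
    (hchar : ∀ (p : MvPolynomial (Fin r × Fin r) ℂ) (k : ℕ),
      (∀ mm ∈ connectedComponentIn (monodromyClosure τ) 1,
        ∀ mm' ∈ connectedComponentIn (monodromyClosure τ) 1,
          charFn p k (mm * mm') = charFn p k mm * charFn p k mm') →
      charFn p k 1 = 1 →
      ∀ mm ∈ connectedComponentIn (monodromyClosure τ) 1, charFn p k mm = 1) :
    -- conclusion: there is no nonconstant `Γ`-invariant rational function on `M`
    ¬ (∃ p q : MvPolynomial (Fin d) ℂ,
      ¬ (∀ x ∈ M, eval x q = 0) ∧
      (∀ (γ : Γ) (x : {x : Fin d → ℂ // x ∈ M}),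
        eval ((act γ x : {x : Fin d → ℂ // x ∈ M}) : Fin d → ℂ) p * eval (x : Fin d → ℂ) q =
        eval (x : Fin d → ℂ) p *
          eval ((act γ x : {x : Fin d → ℂ // x ∈ M}) : Fin d → ℂ) q) ∧
      ¬ (∃ c : ℂ, ∀ x ∈ M, eval x p = c * eval x q)) := by
  rintro ⟨p, q, hq, hpq, hnc⟩
  have hvel (v : Fin r → ℂ) : ∃ z : ℝ → Fin d → ℂ, HasRightVelocity z y (ι v) ∧
      ∀ᶠ t in nhdsWithin 0 (Set.Ioi 0), z t ∈ M :=
    exists_curve M I hclosed y y.2 (fun x hx => hsmooth ⟨x, hx⟩) (ι v)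
      (hιrange ▸ LinearMap.mem_range_self ι v)
  have hFy (γ) : (fun i => eval (y : Fin d → ℂ) (F γ i)) = y := by rw [← hF, hfix]
  -- polynomials on `T_yM` in the coordinates given by `ι`
  let o : MvPolynomial (Fin d) ℂ →ₐ[ℂ] MvPolynomial (Fin r) ℂ :=
    aeval fun i => ∑ j, X j * C (ι (Pi.single j 1) i)
  have ho (v u) : eval v (o u) = eval (ι v) u := by
    have hι (i) : ι v i = ∑ j, v j * ι (Pi.single j 1) i := by
      conv_lhs => rw [pi_eq_sum_univ' v, map_sum]
      simp [Finset.sum_apply, map_smul]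
    induction u using MvPolynomial.induction_on with
    | C c => simp [o, MvPolynomial.algebraMap_eq]
    | add p q hp hq => simp only [map_add, hp, hq]
    | mul_X p i hp =>
      rw [map_mul, map_mul, map_mul, hp, eval_X, hι]
      simp [o]
  have hone {p H a} (hp : IsLeadingForm M y p a H) (hH : ∃ v ∈ TangentSpaceAt M y, eval v H ≠ 0) :
      o H ≠ 0 := by
    obtain ⟨v, hv, hne⟩ := hH
    rw [← hιrange] at hv
    obtain ⟨u, rfl⟩ := hv
    intro h0
    rw [← ho, h0, map_zero] at hne
    exact hne rfl
  obtain ⟨b, Q, hQ, hQ0⟩ := exists_leadingForm M y y.2 hirr q hq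
  have hQ1 := hone hQ hQ0
  obtain ⟨v₀, hv₀⟩ := hopen
  have hcore (p a P) (hp : ∀ (γ : Γ) (x : {x : Fin d → ℂ // x ∈ M}),
        eval ((act γ x : {x : Fin d → ℂ // x ∈ M}) : Fin d → ℂ) p * eval (x : Fin d → ℂ) q =
        eval (x : Fin d → ℂ) p *
          eval ((act γ x : {x : Fin d → ℂ // x ∈ M}) : Fin d → ℂ) q)
      (hP : IsLeadingForm M y p a P) (hP0 : ∃ v ∈ TangentSpaceAt M y, eval v P ≠ 0) :
      a = b ∧ ∃ c : ℂ, o P = C c * o Q := by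
    obtain ⟨c, hc⟩ := proportional_of_relation τ (o P) (o Q) v₀ hv₀ hQ1 (fun γ v => by
      obtain ⟨z, hz, hzM⟩ := hvel v
      have hz' := hz.map (F γ) (hFy γ)
      rw [hcompat] at hz'
      simp only [ho]
      refine hP.relation hQ hz hz' hzM ?_ ?_
      · filter_upwards [hzM] with t ht
        rw [← hF γ ⟨z t, ht⟩]
        exact Subtype.prop _
      · filter_upwards [hzM] with t ht
        rw [← hF γ ⟨z t, ht⟩]
        exact hp γ ⟨z t, ht⟩)
    refine ⟨?_, c, hc⟩
    obtain ⟨v, hv⟩ : ∃ v, eval v (o P) ≠ 0 := by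
      by_contra! hall
      exact hone hP hP0 (MvPolynomial.funext fun v => by rw [hall, map_zero])
    -- comparing the values at `v` and `2 • v` determines the degree
    have h1 := congrArg (eval v) hc
    have h2 := congrArg (eval ((2 : ℂ) • v)) hc
    rw [map_mul, eval_C] at h1 h2
    rw [ho, ho, map_smul, IsHomogeneous.eval_smul' hP.1, IsHomogeneous.eval_smul' hQ.1, ← ho,
      ← ho, mul_left_comm, ← h1] at h2
    have h3 : ((2 : ℕ) : ℂ) ^ a = ((2 : ℕ) : ℂ) ^ b := by exact_mod_cast mul_right_cancel₀ hv h2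
    exact Nat.pow_right_injective le_rfl (by exact_mod_cast h3)
  by_cases hp : ∀ x ∈ M, eval x p = 0
  · exact hnc ⟨0, fun x hx => by rw [hp x hx, zero_mul]⟩
  obtain ⟨a, P, hP, hP0⟩ := exists_leadingForm M y y.2 hirr p hp
  obtain ⟨rfl, c, hc⟩ := hcore p a P hpq hP hP0
  -- `(p - c q) / q` is also invariant, so `p - c q` has a nonzero leading form of the same degree;
  -- but its coefficient in that degree is `P - c Q`, which vanishes on `T_yM`
  have hp' : ¬ ∀ x ∈ M, eval x (p - C c * q) = 0 := fun h =>
    hnc ⟨c, fun x hx => by simpa [sub_eq_zero] using h x hx⟩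
  obtain ⟨a', P', hP', hP0'⟩ := exists_leadingForm M y y.2 hirr _ hp'
  obtain ⟨rfl, -⟩ := hcore _ a' P' (fun γ x => by
    simp only [map_sub, map_mul, eval_C]
    linear_combination hpq γ x) hP' hP0'
  refine hone hP' hP0' (MvPolynomial.funext fun v => ?_)
  obtain ⟨z, hz, hzM⟩ := hvel v
  have h1 := hP'.2 z _ hz hzM
  have h2 := (hP.2 z _ hz hzM).sub ((hQ.2 z _ hz hzM).const_mul c)
  have h3 := tendsto_nhds_unique h1 (h2.congr fun t => by
    simp only [map_sub, map_mul, eval_C]; ring)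
  rw [ho, h3, ← ho, ← ho, hc, map_mul, eval_C, sub_self, map_zero]
end

section
/- Suppose a finitely presented group Γ acts by algebraic automorphisms on an irreducible complex affine algebraic variety M. Then either there exists a nonconstant Γ-invariant rational function on M, or there exists a point x ∈ M whose Γ-orbit is Zariski dense in M. -/
/-!
The proof only uses that `Γ` acts by automorphisms of the coordinate ring `A` of `M` and that `ℂ` is
uncountable; `Γ` may be any group.

Suppose every invariant rational function is constant.

* Artin's argument on a shortest relation (`relation_eq_zero`): if `a₁, …, aₙ ∈ A` are linearly
  independent over `ℂ`, the only `f ∈ Aⁿ` with `∑ fᵢ · γ^*aᵢ = 0` for all `γ` is `f = 0`. For a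
  relation of minimal support the quotients `fᵢ / fⱼ` are invariant, hence constant, and then
  `γ = 1` gives a linear relation between the `aᵢ`.
* Hence some determinant `det (γⱼ^* aᵢ)` is a nonzero function on `M` (`exists_det_ne_zero`).
* `A` has a countable basis, so these determinants, one for every finite list of basis
  elements, form a countable family, and some `x ∈ M` is a zero of none of them
  (`exists_point_avoiding`). The nonvanishing at `x` says that a combination of the `aᵢ` vanishing
  at all `γⱼ x` is zero. So every function vanishing on the orbit of `x` is zero.

The point `x` comes from the Nullstellensatz for polynomial rings in countably many variables: a
field extension of `ℂ` of countable dimension is trivial, because `1 / (t - c)`, `c ∈ ℂ`, are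
linearly independent for transcendental `t`.
-/

open MvPolynomial

/-- A quotient field of a complex polynomial ring in countably many variables is `ℂ` itself, so a
proper ideal has a zero. -/
theorem exists_zero_of_ne_top {τ : Type} [Countable τ] (J : Ideal (MvPolynomial τ ℂ)) (hJ : J ≠ ⊤) :
    ∃ y : τ → ℂ, ∀ p ∈ J, eval y p = 0 := by
  obtain ⟨m, hm, hJm⟩ := J.exists_le_maximal hJ
  let : Field (MvPolynomial τ ℂ ⧸ m) := Ideal.Quotient.field m
  have hrank : Module.rank ℂ (MvPolynomial τ ℂ ⧸ m) ≤ Cardinal.aleph0 := by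
    refine ((Ideal.Quotient.mkₐ ℂ m).toLinearMap.rank_le_of_surjective
      (Ideal.Quotient.mkₐ_surjective ℂ m)).trans ?_
    rw [← (basisMonomials τ ℂ).mk_eq_rank'']
    exact Cardinal.mk_le_aleph0
  have hint : Algebra.IsIntegral ℂ (MvPolynomial τ ℂ ⧸ m) := by
    rw [← Algebra.isAlgebraic_iff_isIntegral]
    refine ⟨fun t => ?_⟩
    by_contra ht
    have h := (Transcendental.linearIndependent_sub_inv ht).cardinal_le_rank
    have h' := h.trans hrank
    rw [Cardinal.mk_complex] at h'
    exact absurd h' (not_le.mpr Cardinal.aleph0_lt_continuum)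
  have hbij := IsAlgClosed.algebraMap_bijective_of_isIntegral (k := ℂ) (K := MvPolynomial τ ℂ ⧸ m)
  let e := AlgEquiv.ofBijective (Algebra.ofId ℂ (MvPolynomial τ ℂ ⧸ m)) hbij
  let ψ : MvPolynomial τ ℂ →ₐ[ℂ] ℂ := (e.symm : _ →ₐ[ℂ] ℂ).comp (Ideal.Quotient.mkₐ ℂ m)
  refine ⟨fun i => ψ (X i), fun p hp => ?_⟩
  have h1 : eval (fun i => ψ (X i)) p = ψ p := by
    rw [← MvPolynomial.coe_aeval_eq_eval]
    exact (DFunLike.congr_fun (MvPolynomial.aeval_unique ψ) p).symm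
  have h2 : Ideal.Quotient.mkₐ ℂ m p = 0 := Ideal.Quotient.eq_zero_iff_mem.mpr (hJm hp)
  rw [h1]
  change e.symm (Ideal.Quotient.mkₐ ℂ m p) = 0
  rw [h2, map_zero]

/-- The zero locus of a prime ideal is not covered by countably many hypersurfaces that do not
contain it. -/
theorem exists_point_avoiding {d : ℕ} {κ : Type} [Countable κ]
    (P : Ideal (MvPolynomial (Fin d) ℂ)) [P.IsPrime] (D : κ → MvPolynomial (Fin d) ℂ)
    (hD : ∀ k, D k ∉ P) :
    ∃ x : Fin d → ℂ, (∀ p ∈ P, eval x p = 0) ∧ ∀ k, eval x (D k) ≠ 0 := by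
  let K := FractionRing (MvPolynomial (Fin d) ℂ ⧸ P)
  let π : MvPolynomial (Fin d) ℂ →ₐ[ℂ] K :=
    (Algebra.algHom ℂ (MvPolynomial (Fin d) ℂ ⧸ P) K).comp (Ideal.Quotient.mkₐ ℂ P)
  have hπ : ∀ p, π p = 0 ↔ p ∈ P := fun p => by
    rw [← Ideal.Quotient.eq_zero_iff_mem]
    exact (IsFractionRing.injective (MvPolynomial (Fin d) ℂ ⧸ P) K).eq_iff'
      (map_zero (algebraMap (MvPolynomial (Fin d) ℂ ⧸ P) K))
  -- Rabinowitsch trick: one extra variable `y k` for the inverse of each `D k`.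
  let Φ : MvPolynomial (Fin d ⊕ κ) ℂ →ₐ[ℂ] K :=
    aeval (Sum.elim (fun i => π (X i)) (fun k => (π (D k))⁻¹))
  have hΦ : ∀ p, Φ (rename Sum.inl p) = π p := fun p => by
    simp only [Φ, aeval_rename, Sum.elim_comp_inl]
    exact (DFunLike.congr_fun (MvPolynomial.aeval_unique π) p).symm
  obtain ⟨y, hy⟩ := exists_zero_of_ne_top (RingHom.ker Φ) (RingHom.ker_ne_top Φ)
  have hev : ∀ p, eval y (rename Sum.inl p) = eval (y ∘ Sum.inl) p := fun p => eval_rename _ _ _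
  refine ⟨y ∘ Sum.inl, fun p hp => ?_, fun k hk => ?_⟩
  · rw [← hev]
    exact hy _ (by rw [RingHom.mem_ker, hΦ, hπ]; exact hp)
  · have h := hy (rename Sum.inl (D k) * X (Sum.inr k) - 1) (by
      rw [RingHom.mem_ker, map_sub, map_mul, hΦ, map_one]
      simp only [Φ, aeval_X, Sum.elim_inr]
      rw [mul_inv_cancel₀ (mt (hπ _).mp (hD k)), sub_self])
    rw [map_sub, map_mul, hev, hk] at h
    simp at h

/-- Artin's shortest-relation argument. The maps `σ γ` stand for the pullbacks `γ^*`, whence the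
reversed order in `hσ`; `hinv` says, denominators cleared, that invariant fractions are constant. -/
theorem relation_eq_zero {k A G ι : Type*} [Field k] [CommRing A] [IsDomain A] [Algebra k A]
    [Group G] [Fintype ι] (σ : G → A →ₐ[k] A) (hone : ∀ a, σ 1 a = a)
    (hσ : ∀ γ δ a, σ γ (σ δ a) = σ (δ * γ) a)
    (hinv : ∀ p q : A, q ≠ 0 → (∀ γ, σ γ p * q = p * σ γ q) → ∃ c : k, p = c • q)
    (a : ι → A) (ha : LinearIndependent k a) (f : ι → A)
    (hf : ∀ γ, ∑ i, f i * σ γ (a i) = 0) : f = 0 := by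
  classical
  induction hn : (Finset.univ.filter fun i => f i ≠ 0).card using Nat.strong_induction_on
    generalizing f with
  | _ n ih =>
  by_contra hne
  obtain ⟨j, hj⟩ := Function.ne_iff.mp hne
  have hj : f j ≠ 0 := hj
  have hfix : ∀ (δ : G) (i : ι), f i * σ δ (f j) - f j * σ δ (f i) = 0 := by
    intro δ
    refine fun i => congrFun (ih _ ?_ (fun i => f i * σ δ (f j) - f j * σ δ (f i)) ?_ rfl) i
    · rw [← hn]
      refine Finset.card_lt_card (Finset.ssubset_iff_of_subset ?_ |>.mpr ⟨j, ?_, ?_⟩)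
      · intro i hi
        simp only [Finset.mem_filter, Finset.mem_univ, true_and] at hi ⊢
        intro h
        simp [h] at hi
      · simpa using hj
      · simp
    · intro γ
      have h1 : ∑ i, σ δ (f i) * σ γ (a i) = 0 := by
        have := congrArg (σ δ) (hf (γ * δ⁻¹))
        simpa [map_sum, hσ] using this
      calc ∑ i, (f i * σ δ (f j) - f j * σ δ (f i)) * σ γ (a i)
          = σ δ (f j) * ∑ i, f i * σ γ (a i) - f j * ∑ i, σ δ (f i) * σ γ (a i) := by
            rw [Finset.mul_sum, Finset.mul_sum, ← Finset.sum_sub_distrib]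
            exact Finset.sum_congr rfl fun i _ => by ring
        _ = 0 := by rw [hf γ, h1]; ring
  choose c hc using fun i => hinv (f i) (f j) hj fun γ => by linear_combination -hfix γ i
  have h1 : f j * ∑ i, c i • a i = 0 := by
    rw [← hf 1, Finset.mul_sum]
    refine Finset.sum_congr rfl fun i _ => ?_
    rw [hone, hc i, mul_smul_comm, smul_mul_assoc]
  have h2 := Fintype.linearIndependent_iff.mp ha c ((mul_eq_zero.mp h1).resolve_left hj) j
  exact hj (by rw [hc j, h2, zero_smul])

/-- Adding one row at a time: if no further row made the determinant nonzero, the cofactors of the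
last row would be a relation excluded by `relation_eq_zero`. -/
theorem exists_det_ne_zero {k A G : Type*} [Field k] [CommRing A] [IsDomain A] [Algebra k A]
    [Group G] (σ : G → A →ₐ[k] A) (hone : ∀ a, σ 1 a = a)
    (hσ : ∀ γ δ a, σ γ (σ δ a) = σ (δ * γ) a)
    (hinv : ∀ p q : A, q ≠ 0 → (∀ γ, σ γ p * q = p * σ γ q) → ∃ c : k, p = c • q)
    (n : ℕ) (a : Fin n → A) (ha : LinearIndependent k a) :
    ∃ γ : Fin n → G, (Matrix.of fun j i => σ (γ j) (a i)).det ≠ 0 := by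
  induction n with
  | zero => exact ⟨Fin.elim0, by simp⟩
  | succ n ih =>
    obtain ⟨γ, hγ⟩ := ih (a ∘ Fin.castSucc) (ha.comp _ (Fin.castSucc_injective n))
    by_contra! hcon
    have h := relation_eq_zero σ hone hσ hinv a ha
      (fun i => (-1) ^ (n + (i : ℕ)) *
        (Matrix.of fun j l => σ (γ j) (a (i.succAbove l))).det) fun g => by
      rw [← hcon (Fin.snoc γ g), Matrix.det_succ_row _ (Fin.last n)]
      refine Finset.sum_congr rfl fun i _ => ?_
      have hsub : (Matrix.of fun j i => σ ((Fin.snoc γ g : Fin (n + 1) → G) j) (a i)).submatrix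
          (Fin.last n).succAbove i.succAbove =
          Matrix.of fun j l => σ (γ j) (a (i.succAbove l)) := by
        ext j l
        simp
      rw [hsub]
      simp only [Matrix.of_apply, Fin.snoc_last, Fin.val_last]
      ring
    have hlast := congrFun h (Fin.last n)
    simp only [Fin.succAbove_last, Pi.zero_apply, mul_eq_zero] at hlast
    rcases hlast with h0 | h0
    · exact pow_ne_zero _ (neg_ne_zero.mpr one_ne_zero) h0
    · exact hγ h0


/-- Let a finitely presented group `Γ` act by algebraic automorphisms on
an irreducible affine complex variety `M ⊆ ℂ^d`.  Then either there is a nonconstant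
`Γ`-invariant rational function on `M`, or some point of `M` has a Zariski dense
`Γ`-orbit. -/
theorem invariant_function_or_dense_orbit
    {d : ℕ} {Γ : Type*} [Group Γ] (hΓ : GroupFinitelyPresented Γ)
    (M : Set (Fin d → ℂ))
    -- `M` is Zariski closed, cut out by the polynomials in `I`
    (I : Set (MvPolynomial (Fin d) ℂ))
    (hclosed : M = {x | ∀ p ∈ I, eval x p = 0})
    -- `M` is (reduced and) irreducible: nonempty with prime vanishing ideal
    (hne : M.Nonempty)
    (hirr : ∀ p q : MvPolynomial (Fin d) ℂ,
      (∀ x ∈ M, eval x p * eval x q = 0) →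
      (∀ x ∈ M, eval x p = 0) ∨ (∀ x ∈ M, eval x q = 0))
    -- `Γ` acts on `M` by automorphisms given by polynomial maps
    (act : Γ →* Equiv.Perm {x : Fin d → ℂ // x ∈ M})
    (halg : ∀ γ : Γ, ∃ F : Fin d → MvPolynomial (Fin d) ℂ,
      ∀ x : {x : Fin d → ℂ // x ∈ M},
        ((act γ x : {x : Fin d → ℂ // x ∈ M}) : Fin d → ℂ) =
          fun i => eval (x : Fin d → ℂ) (F i)) :
    -- either a nonconstant invariant rational function `p/q` on `M` ...
    (∃ p q : MvPolynomial (Fin d) ℂ,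
      ¬ (∀ x ∈ M, eval x q = 0) ∧
      (∀ (γ : Γ) (x : {x : Fin d → ℂ // x ∈ M}),
        eval ((act γ x : {x : Fin d → ℂ // x ∈ M}) : Fin d → ℂ) p * eval (x : Fin d → ℂ) q =
        eval (x : Fin d → ℂ) p *
          eval ((act γ x : {x : Fin d → ℂ // x ∈ M}) : Fin d → ℂ) q) ∧
      ¬ (∃ c : ℂ, ∀ x ∈ M, eval x p = c * eval x q)) ∨
    -- ... or a point with Zariski dense orbit
    (∃ x : {x : Fin d → ℂ // x ∈ M}, ∀ p : MvPolynomial (Fin d) ℂ,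
      (∀ γ : Γ, eval ((act γ x : {x : Fin d → ℂ // x ∈ M}) : Fin d → ℂ) p = 0) →
      ∀ y ∈ M, eval y p = 0) := by
  classical
  -- `A` is the coordinate ring of `M`, realised as the polynomial functions on `M`.
  let φ : MvPolynomial (Fin d) ℂ →ₐ[ℂ] ({x : Fin d → ℂ // x ∈ M} → ℂ) :=
    AlgHom.pi fun x => aeval (x : Fin d → ℂ)
  have hφ : ∀ p x, φ p x = eval (x : Fin d → ℂ) p := fun p x => by
    simp [φ]
  have hφ0 : ∀ p, φ p = 0 ↔ ∀ x ∈ M, eval x p = 0 := fun p => by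
    constructor
    · intro h x hx
      rw [← hφ p ⟨x, hx⟩, h]; rfl
    · intro h
      funext x
      rw [hφ]; exact h x x.2
  let A := φ.range
  let r : MvPolynomial (Fin d) ℂ →ₐ[ℂ] A := φ.rangeRestrict
  have hr : Function.Surjective r := φ.rangeRestrict_surjective
  have hrv : ∀ p x, (r p : {x : Fin d → ℂ // x ∈ M} → ℂ) x = eval (x : Fin d → ℂ) p := hφ
  have hr0 : ∀ p, r p = 0 ↔ ∀ x ∈ M, eval x p = 0 := fun p => by
    rw [← hφ0, Subtype.ext_iff]; rfl
  have : Nonempty {x : Fin d → ℂ // x ∈ M} := hne.to_subtype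
  have : Nontrivial A := inferInstance
  have : NoZeroDivisors A := ⟨fun {f g} h => by
    obtain ⟨p, rfl⟩ := hr f
    obtain ⟨q, rfl⟩ := hr g
    rw [← map_mul, hr0] at h
    rw [hr0, hr0]
    exact hirr p q fun x hx => by rw [← map_mul]; exact h x hx⟩
  have : IsDomain A := NoZeroDivisors.to_isDomain A
  let pre : Γ → ({x : Fin d → ℂ // x ∈ M} → ℂ) →ₐ[ℂ] ({x : Fin d → ℂ // x ∈ M} → ℂ) :=
    fun γ => AlgHom.pi fun x => Pi.evalAlgHom ℂ _ (act γ x)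
  let σ : Γ → A →ₐ[ℂ] A := fun γ => ((pre γ).comp A.val).codRestrict A (by
    intro f
    obtain ⟨p, rfl⟩ := hr f
    obtain ⟨F, hF⟩ := halg γ
    refine ⟨bind₁ F p, ?_⟩
    funext x
    change φ (bind₁ F p) x = φ p (act γ x)
    rw [hφ, hφ, hF x, ← MvPolynomial.coe_aeval_eq_eval, ← MvPolynomial.coe_aeval_eq_eval]
    exact aeval_bind₁ _ _ _)
  have hσv : ∀ γ f x, (σ γ f : {x : Fin d → ℂ // x ∈ M} → ℂ) x =
      (f : {x : Fin d → ℂ // x ∈ M} → ℂ) (act γ x) := fun _ _ _ => rfl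
  refine or_iff_not_imp_left.mpr fun hno => ?_
  have hinv : ∀ p q : A, q ≠ 0 → (∀ γ, σ γ p * q = p * σ γ q) → ∃ c : ℂ, p = c • q := by
    intro f g hg hfg
    obtain ⟨p, rfl⟩ := hr f
    obtain ⟨q, rfl⟩ := hr g
    by_contra hc
    refine hno ⟨p, q, fun h => hg ((hr0 q).mpr h), fun γ x => ?_, ?_⟩
    · have := congrFun (congrArg Subtype.val (hfg γ)) x
      change (σ γ (r p)).1 x * (r q).1 x = (r p).1 x * (σ γ (r q)).1 x at this
      rwa [hσv, hσv, hrv, hrv, hrv, hrv] at this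
    · rintro ⟨c, h⟩
      refine hc ⟨c, ?_⟩
      rw [← map_smul, ← sub_eq_zero, ← map_sub, hr0]
      intro x hx
      rw [map_sub, smul_eval, h x hx, sub_self]
  let b := Module.Basis.ofVectorSpace ℂ A
  have : Countable (Module.Basis.ofVectorSpaceIndex ℂ A) := by
    rw [← Cardinal.mk_le_aleph0_iff, b.mk_eq_rank'']
    refine (r.toLinearMap.rank_le_of_surjective hr).trans ?_
    rw [← (basisMonomials (Fin d) ℂ).mk_eq_rank'']
    exact Cardinal.mk_le_aleph0
  choose g hg using fun s : Finset (Module.Basis.ofVectorSpaceIndex ℂ A) =>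
    exists_det_ne_zero σ (fun f => by ext x; rw [hσv, map_one]; rfl)
      (fun γ δ f => by ext x; rw [hσv, hσv, hσv, map_mul]; rfl) hinv s.card
      (fun i => b (s.equivFin.symm i))
      (b.linearIndependent.comp _ (Subtype.val_injective.comp s.equivFin.symm.injective))
  choose D hD using fun s => hr (Matrix.of fun j i => σ (g s j) (b (s.equivFin.symm i))).det
  have : (RingHom.ker r).IsPrime := RingHom.ker_isPrime r
  obtain ⟨x, hx, hxD⟩ := exists_point_avoiding (RingHom.ker r) D fun s => by
    rw [RingHom.mem_ker, hD]; exact hg s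
  have hxM : x ∈ M := by
    rw [hclosed]
    intro p hp
    refine hx p ?_
    rw [RingHom.mem_ker, hr0]
    intro y hy
    rw [hclosed] at hy
    exact hy p hp
  refine ⟨⟨x, hxM⟩, fun p hp => (hr0 p).mp ?_⟩
  -- The coordinates of `r p` in the basis `b` are in the kernel of the matrix evaluated at `x`.
  set s := (b.repr (r p)).support with hs
  let ev : A →+* ℂ := (Pi.evalRingHom (fun _ => ℂ) (⟨x, hxM⟩ : {x // x ∈ M})).comp A.val.toRingHom
  let N : Matrix (Fin s.card) (Fin s.card) ℂ :=
    Matrix.of fun j i => ev (σ (g s j) (b (s.equivFin.symm i)))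
  have hN : N.det ≠ 0 := by
    have h1 : N.det = ev (Matrix.of fun j i => σ (g s j) (b (s.equivFin.symm i))).det := by
      rw [RingHom.map_det]; rfl
    rw [h1, ← hD]
    exact (hrv (D s) ⟨x, hxM⟩).symm ▸ hxD s
  have hsum : ∑ i : Fin s.card, b.repr (r p) (s.equivFin.symm i) • b (s.equivFin.symm i) = r p := by
    rw [s.equivFin.symm.sum_comp (fun i : s => b.repr (r p) i • b i),
      Finset.sum_coe_sort s (fun i => b.repr (r p) i • b i)]
    exact b.linearCombination_repr (r p)
  have hker : N.mulVec (fun i => b.repr (r p) (s.equivFin.symm i)) = 0 := by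
    funext j
    have h1 : ev (σ (g s j) (r p)) = 0 := (hrv p (act (g s j) ⟨x, hxM⟩)).trans (hp _)
    rw [← hsum, map_sum, map_sum] at h1
    rw [Pi.zero_apply, ← h1, Matrix.mulVec, dotProduct]
    refine Finset.sum_congr rfl fun i _ => ?_
    rw [map_smul (σ (g s j))]
    exact mul_comm _ _
  have hzero := Matrix.eq_zero_of_mulVec_eq_zero hN hker
  rw [← hsum]
  exact Finset.sum_eq_zero fun i _ => by rw [congrFun hzero i, Pi.zero_apply, zero_smul]
end
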